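/- Let $A_0,A_1,A_2,A_3\in\mathbb{C}$ be algebraically independent over $\mathbb{Q}$, and write $A_{\varepsilon_0\varepsilon_1\varepsilon_2\varepsilon_3}:=(\varepsilon_0A_0+\varepsilon_1A_1+\varepsilon_2A_2+\varepsilon_3A_3+1)/2$ for signs $\varepsilon_j\in\{+,-\}$. Put $$H_0(n;A):=\frac{-\{4(n-A_0)^2-1\}\{(2n^2-4A_0n+A_0^2+A_1^2-A_2^2-A_3^2+1)^2-4(n-A_0)^2\}}{4n(n-2A_0)(n-A_0-A_2)(n-A_0+A_2)(n-A_0-A_3)(n-A_0+A_3)}.$$ For a tuple $\alpha=(\alpha_0,\alpha_1,\alpha_2,\alpha_3;\beta_1,\beta_2,\beta_3)$ of complex numbers put $$U_1(\alpha)=\frac{-(\beta_1-\alpha_1)(\beta_1+\beta_2-\alpha_2-\alpha_3)}{\beta_1(\beta_3-\alpha_0-1)},\qquad V_1(\alpha)=\frac{-\alpha_1(\beta_2-\alpha_2)(\beta_2-\alpha_3)}{\beta_1\beta_2(\beta_3-\alpha_0-1)},$$ $$U_2(\alpha)=\frac{-(\beta_2-\alpha_0)(\beta_1+\beta_2-\alpha_2-\alpha_3)}{\beta_2(\beta_3-\alpha_1-1)},\qquad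 V_2(\alpha)=\frac{-\alpha_0(\beta_1-\alpha_2)(\beta_1-\alpha_3)}{\beta_1\beta_2(\beta_3-\alpha_1-1)},$$ $$q_1(\alpha)=U_1(\alpha)U_2(\alpha+e_1)+V_1(\alpha)+\frac{U_1(\alpha)V_2(\alpha+e_1)}{U_1(\alpha+e_{12})},\qquad q_2(\alpha)=\frac{-U_1(\alpha)V_1(\alpha+e_{12})V_2(\alpha+e_1)}{U_1(\alpha+e_{12})},$$ where adding $e_1$ adds $1$ to $\alpha_0,\beta_1$ and adding $e_{12}$ adds $1$ to $\alpha_0,\alpha_1,\beta_1,\beta_2$. For $\hat\alpha=(0,\alpha_1,\alpha_2,\alpha_3;\beta_1,\beta_2,\beta_3)$ let $(n;\hat\alpha):=(-n,\alpha_1-n,\alpha_2,\alpha_3;\beta_1-n,\beta_2-n,\beta_3)$ and $$H^{(0)}(n;\hat\alpha):=\frac{q_1(n;\hat\alpha)\,q_1(n+1;\hat\alpha)}{q_2(n+1;\hat\alpha)}.$$ Either expression is called defined at $n$ if none of the denominators occurring in these formulas vanishes. Let $\hat\alpha=(0,\alpha_1,\alpha_2,\alpha_3;\beta_1,\beta_2,\beta_3)$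 be a tuple of complex numbers satisfying the balanced condition $\beta_1+\beta_2+\beta_3-\alpha_1-\alpha_2-\alpha_3=1$. Then $H_0(\cdot\,;A)$ and $H^{(0)}(\cdot\,;\hat\alpha)$ agree as functions of $n$ (that is, both are defined for all but finitely many integers $n\ge1$, and $H_0(n;A)=H^{(0)}(n;\hat\alpha)$ for all integers $n\ge1$ at which both are defined) if and only if $\hat\alpha$ is obtained from $$(0,\,A_0,\,A_{-+-+},\,A_{-++-};\ A_{++--},\,A_{++++},\,1-A_0)$$ or from $$(0,\,A_0-A_2,\,A_{-+-+},\,A_{-+--};\ A_{++--},\,A_{++-+},\,1-A_0-A_2)$$ by applying some combination of the substitutions $A_j\to-A_j$ ($j\in\{1,2,3\}$), the exchange $A_2\leftrightarrow A_3$, and the swaps $\alpha_2\leftrightarrow\alpha_3$ and $\beta_1\leftrightarrow\beta_2$. -/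

import Mathlib

namespace Stmt14

/-- A parameter tuple `(α₀, α₁, α₂, α₃; β₁, β₂, β₃)` for `₄F₃`. -/
structure HGParam where
  a0 : ℂ
  a1 : ℂ
  a2 : ℂ
  a3 : ℂ
  b1 : ℂ
  b2 : ℂ
  b3 : ℂ

/-- The shift `e₁`: add `1` to `α₀` and `β₁`. -/
def e1 (p : HGParam) : HGParam := ⟨p.a0 + 1, p.a1, p.a2, p.a3, p.b1 + 1, p.b2, p.b3⟩

/-- The shift `e₁₂`: add `1` to each of `α₀, α₁, β₁, β₂`. -/
def e12 (p : HGParam) : HGParam := ⟨p.a0 + 1, p.a1 + 1, p.a2, p.a3, p.b1 + 1, p.b2 + 1, p.b3⟩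

noncomputable def U1 (p : HGParam) : ℂ :=
  -((p.b1 - p.a1) * (p.b1 + p.b2 - p.a2 - p.a3)) / (p.b1 * (p.b3 - p.a0 - 1))

noncomputable def V1 (p : HGParam) : ℂ :=
  -(p.a1 * (p.b2 - p.a2) * (p.b2 - p.a3)) / (p.b1 * p.b2 * (p.b3 - p.a0 - 1))

noncomputable def U2 (p : HGParam) : ℂ :=
  -((p.b2 - p.a0) * (p.b1 + p.b2 - p.a2 - p.a3)) / (p.b2 * (p.b3 - p.a1 - 1))

noncomputable def V2 (p : HGParam) : ℂ :=
  -(p.a0 * (p.b1 - p.a2) * (p.b1 - p.a3)) / (p.b1 * p.b2 * (p.b3 - p.a1 - 1))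

noncomputable def q1 (p : HGParam) : ℂ :=
  U1 p * U2 (e1 p) + V1 p + U1 p * V2 (e1 p) / U1 (e12 p)

noncomputable def q2 (p : HGParam) : ℂ :=
  -(U1 p * V1 (e12 p) * V2 (e1 p)) / U1 (e12 p)

/-- `(n; α̂) = −n·e₁₂ + α̂`. -/
noncomputable def shiftn (p : HGParam) (n : ℕ) : HGParam :=
  ⟨p.a0 - (n : ℂ), p.a1 - (n : ℂ), p.a2, p.a3, p.b1 - (n : ℂ), p.b2 - (n : ℂ), p.b3⟩

/-- The invariant `H⁽⁰⁾(n; α̂) = q₁⁽⁰⁾(n;α̂)q₁⁽⁰⁾(n+1;α̂)/q₂⁽⁰⁾(n+1;α̂)`. -/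
noncomputable def HF (p : HGParam) (n : ℕ) : ℂ :=
  q1 (shiftn p n) * q1 (shiftn p (n + 1)) / q2 (shiftn p (n + 1))

/-- The invariant `H₀(n; A)` of the recurrence `Rc₀(A)`. -/
noncomputable def H0 (A₀ A₁ A₂ A₃ : ℂ) (n : ℕ) : ℂ :=
  -((4 * ((n : ℂ) - A₀) ^ 2 - 1)
      * ((2 * (n : ℂ) ^ 2 - 4 * A₀ * (n : ℂ) + A₀ ^ 2 + A₁ ^ 2 - A₂ ^ 2 - A₃ ^ 2 + 1) ^ 2
          - 4 * ((n : ℂ) - A₀) ^ 2))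
    / (4 * (n : ℂ) * ((n : ℂ) - 2 * A₀) * ((n : ℂ) - A₀ - A₂) * ((n : ℂ) - A₀ + A₂)
        * ((n : ℂ) - A₀ - A₃) * ((n : ℂ) - A₀ + A₃))

/-- Every denominator occurring in the formula for `q₁⁽⁰⁾` at `p` is nonzero. -/
def Q1Def (p : HGParam) : Prop :=
  p.b1 ≠ 0 ∧ p.b2 ≠ 0 ∧ p.b1 + 1 ≠ 0 ∧ p.b3 - p.a0 - 1 ≠ 0 ∧ p.b3 - p.a0 - 2 ≠ 0 ∧
    p.b3 - p.a1 - 1 ≠ 0 ∧ U1 (e12 p) ≠ 0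

/-- Every denominator occurring in the formula for `q₂⁽⁰⁾` at `p` is nonzero. -/
def Q2Def (p : HGParam) : Prop :=
  p.b1 ≠ 0 ∧ p.b2 ≠ 0 ∧ p.b1 + 1 ≠ 0 ∧ p.b2 + 1 ≠ 0 ∧ p.b3 - p.a0 - 1 ≠ 0 ∧
    p.b3 - p.a0 - 2 ≠ 0 ∧ p.b3 - p.a1 - 1 ≠ 0 ∧ U1 (e12 p) ≠ 0

/-- `H₀(n; A)` is defined (its denominator is nonzero). -/
def H0Def (A₀ A₁ A₂ A₃ : ℂ) (n : ℕ) : Prop :=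
  4 * (n : ℂ) * ((n : ℂ) - 2 * A₀) * ((n : ℂ) - A₀ - A₂) * ((n : ℂ) - A₀ + A₂)
    * ((n : ℂ) - A₀ - A₃) * ((n : ℂ) - A₀ + A₃) ≠ 0

/-- `H⁽⁰⁾(n; α̂)` is defined (all denominators are nonzero). -/
def HFDef (p : HGParam) (n : ℕ) : Prop :=
  Q1Def (shiftn p n) ∧ Q1Def (shiftn p (n + 1)) ∧ Q2Def (shiftn p (n + 1)) ∧
    q2 (shiftn p (n + 1)) ≠ 0

/-- The tuple `(0, B₀, B₋₊₋₊, B₋₊₊₋; B₊₊₋₋, B₊₊₊₊, 1−B₀)`. -/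
noncomputable def T1 (B₀ B₁ B₂ B₃ : ℂ) : HGParam :=
  ⟨0, B₀, (-B₀ + B₁ - B₂ + B₃ + 1) / 2, (-B₀ + B₁ + B₂ - B₃ + 1) / 2,
    (B₀ + B₁ - B₂ - B₃ + 1) / 2, (B₀ + B₁ + B₂ + B₃ + 1) / 2, 1 - B₀⟩

/-- The tuple `(0, B₀−B₂, B₋₊₋₊, B₋₊₋₋; B₊₊₋₋, B₊₊₋₊, 1−B₀−B₂)`. -/
noncomputable def T2 (B₀ B₁ B₂ B₃ : ℂ) : HGParam :=
  ⟨0, B₀ - B₂, (-B₀ + B₁ - B₂ + B₃ + 1) / 2, (-B₀ + B₁ - B₂ - B₃ + 1) / 2,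
    (B₀ + B₁ - B₂ - B₃ + 1) / 2, (B₀ + B₁ - B₂ + B₃ + 1) / 2, 1 - B₀ - B₂⟩

/-- The swap `α₂ ↔ α₃`. -/
def swapAl (p : HGParam) : HGParam := ⟨p.a0, p.a1, p.a3, p.a2, p.b1, p.b2, p.b3⟩

/-- The swap `β₁ ↔ β₂`. -/
def swapBe (p : HGParam) : HGParam := ⟨p.a0, p.a1, p.a2, p.a3, p.b2, p.b1, p.b3⟩

end Stmt14

open Stmt14

/-!
As functions of the distance to their centres of symmetry (`A₀` for `H₀`, some `c` for `H⁽⁰⁾`) both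
invariants are even rational functions. If they agree at almost all integers, composing the two
reflections gives `H₀` a period, so `c = A₀`. Since `H₀` is in lowest terms, its poles are poles of
`H⁽⁰⁾`, and comparing what is left forces the squared roots `x²`, `y²`, `z²` of the denominator of
`H⁽⁰⁾` to be `0`, `A₂²`, `A₃²` in some order, and the remaining coordinate `k` to be `±A₁`. The two
tuples of the theorem and their swaps place the zero at `x`, `y` or `z`.
-/

namespace Stmt14

open Filter Polynomial

theorem natDegree_eq_zero_of_taylor_eq_self {R : Type*} [CommRing R] [IsDomain R] [CharZero R]
    {f : R[X]} {d : R} (hd : d ≠ 0) (h : taylor d f = f) : f.natDegree = 0 := by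
  have heval (n : ℕ) : f.eval (n * d) = f.eval 0 := by
    induction n with
    | zero => simp
    | succ n ih => rw [← ih, Nat.cast_succ, add_one_mul, ← taylor_eval, h]
  have hinj : Function.Injective fun n : ℕ => (n : R) * d :=
    (mul_left_injective₀ hd).comp Nat.cast_injective
  rw [f.eq_of_infinite_eval_eq (C (f.eval 0)) <| (Set.infinite_range_of_injective hinj).mono <| by
    rintro _ ⟨n, rfl⟩; simpa using heval n]
  exact natDegree_C _

theorem eq_zero_of_isCoprime_of_taylor_mul_eq {F : Type*} [Field F] [CharZero F] {P Q : F[X]}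
    {d : F} (hPQ : IsCoprime P Q) (hQ : Q.natDegree ≠ 0) (h : taylor d P * Q = P * taylor d Q) :
    d = 0 := by
  by_contra hd
  have hdvd : Q ∣ taylor d Q := hPQ.symm.dvd_of_dvd_mul_left (Dvd.intro_left _ h)
  have hper : Q = taylor d Q := eq_of_dvd_of_natDegree_le_of_leadingCoeff hdvd
    (natDegree_taylor Q d).le (leadingCoeff_taylor d Q).symm
  exact hQ (natDegree_eq_zero_of_taylor_eq_self hd hper.symm)

theorem taylor_comp_neg_X {R : Type*} [CommRing R] {f : R[X]} (hf : f.comp (-X) = f) (e : R) :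
    (taylor e f).comp (-X) = taylor (-e) f := by
  conv_rhs => rw [← hf]
  simp only [taylor_apply, comp_assoc]
  congr 1
  simp only [add_comp, neg_comp, X_comp, C_comp, C_neg]
  ring

/-- Composing the reflections of the two even fractions about their centres gives `P / Q` the
period `2 * e`. -/
theorem eq_zero_of_even_of_mul_taylor_eq {F : Type*} [Field F] [CharZero F] {N D P Q : F[X]}
    {e : F} (hN : N.comp (-X) = N) (hD : D.comp (-X) = D) (hP : P.comp (-X) = P)
    (hQ : Q.comp (-X) = Q) (hD0 : D ≠ 0) (hPQ : IsCoprime P Q) (hQdeg : Q.natDegree ≠ 0)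
    (h : N * taylor e Q = taylor e P * D) : e = 0 := by
  have hP0 : P ≠ 0 := by
    rintro rfl
    exact hQdeg (natDegree_eq_zero_of_isUnit (isCoprime_zero_left.1 hPQ))
  have hN0 : N ≠ 0 := by
    rintro rfl
    rw [zero_mul, eq_comm, mul_eq_zero, taylor_eq_zero] at h
    exact h.elim hP0 hD0
  have hrefl : N * taylor (-e) Q = taylor (-e) P * D := by
    simpa only [mul_comp, hN, hD, taylor_comp_neg_X hP, taylor_comp_neg_X hQ]
      using congrArg (fun f => f.comp (-X)) h
  have hcross : taylor e P * taylor (-e) Q = taylor (-e) P * taylor e Q := by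
    refine mul_right_cancel₀ (mul_ne_zero hN0 hD0) ?_
    linear_combination taylor e P * D * hrefl - taylor (-e) P * D * h
  have hper : taylor (e + e) P * Q = P * taylor (e + e) Q := by
    simpa only [taylor_mul, taylor_taylor, add_neg_cancel, taylor_zero]
      using congrArg (taylor e) hcross
  simpa using eq_zero_of_isCoprime_of_taylor_mul_eq hPQ hQdeg hper

theorem eventually_eval_natCast_sub_ne_zero {R : Type*} [CommRing R] [IsDomain R] [CharZero R]
    {f : R[X]} (hf : f ≠ 0) (a : R) : ∀ᶠ n : ℕ in atTop, f.eval (n - a) ≠ 0 := by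
  have hinj : Function.Injective fun n : ℕ => (n : R) - a :=
    sub_left_injective.comp Nat.cast_injective
  rw [← Nat.cofinite_eq_atTop]
  exact ((finite_setOfPred_isRoot hf).preimage hinj.injOn).compl_mem_cofinite

theorem eventually_natCast_ne {R : Type*} [CommRing R] [IsDomain R] [CharZero R] (a : R) :
    ∀ᶠ n : ℕ in atTop, (n : R) ≠ a := by
  simpa only [eval_X, sub_ne_zero] using eventually_eval_natCast_sub_ne_zero (X_ne_zero (R := R)) a

theorem eq_of_eventually_eval_natCast_sub_eq {R : Type*} [CommRing R] [IsDomain R] [CharZero R]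
    {f g : R[X]} (a : R) (h : ∀ᶠ n : ℕ in atTop, f.eval (n - a) = g.eval (n - a)) : f = g := by
  by_contra hfg
  obtain ⟨n, heq, hne⟩ :=
    (h.and (eventually_eval_natCast_sub_ne_zero (sub_ne_zero.2 hfg) a)).exists
  exact hne (by rw [eval_sub, heq, sub_self])

section ProdXSqSubC

variable {R : Type*} [CommRing R]

/-- The monic even polynomial `∏ (X² - s)` over the multiset `S` of squares of its roots. -/
noncomputable def prodXSqSubC (S : Multiset R) : R[X] := (S.map fun s => X ^ 2 - C s).prod

theorem prodXSqSubC_cons (s : R) (S : Multiset R) :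
    prodXSqSubC (s ::ₘ S) = (X ^ 2 - C s) * prodXSqSubC S := by
  simp [prodXSqSubC]

theorem eval_prodXSqSubC (S : Multiset R) (r : R) :
    (prodXSqSubC S).eval r = (S.map fun s => r ^ 2 - s).prod := by
  simp [prodXSqSubC, eval_multiset_prod]

theorem prodXSqSubC_comp_neg_X (S : Multiset R) :
    (prodXSqSubC S).comp (-X) = prodXSqSubC S := by
  simp [prodXSqSubC, multiset_prod_comp]

theorem expand_prod_X_sub_C (S : Multiset R) :
    expand R 2 (S.map fun s => X - C s).prod = prodXSqSubC S := by
  simp [prodXSqSubC, map_multiset_prod]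

theorem natDegree_prodXSqSubC [Nontrivial R] (S : Multiset R) :
    (prodXSqSubC S).natDegree = 2 * S.card := by
  rw [← expand_prod_X_sub_C, natDegree_expand, natDegree_multiset_prod_X_sub_C_eq_card, mul_comm]

theorem prodXSqSubC_ne_zero [Nontrivial R] (S : Multiset R) : prodXSqSubC S ≠ 0 := by
  rw [← expand_prod_X_sub_C, Ne, expand_eq_zero two_pos]
  exact (monic_multisetProd_X_sub_C S).ne_zero

theorem le_of_prodXSqSubC_dvd [IsDomain R] {S T : Multiset R}
    (h : prodXSqSubC S ∣ prodXSqSubC T) : S ≤ T := by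
  rw [← expand_prod_X_sub_C, ← expand_prod_X_sub_C] at h
  obtain ⟨f, hf⟩ := h
  have hdvd : (S.map fun s => X - C s).prod ∣ (T.map fun t => X - C t).prod := by
    refine ⟨contract 2 f, ?_⟩
    rw [← contract_expand 2 (f := (T.map fun t => X - C t).prod) two_ne_zero, hf, mul_comm,
      contract_mul_expand two_ne_zero, mul_comm]
  rwa [Multiset.prod_X_sub_C_dvd_iff_le_roots (monic_multisetProd_X_sub_C T).ne_zero,
    roots_multiset_prod_X_sub_C] at hdvd

end ProdXSqSubC

section Invariants

variable {R : Type*} [CommRing R]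

/-- The factor `(X(X - 1))² + β X(X - 1) + γ` of the numerator of `q₁⁽⁰⁾`. -/
noncomputable def quartic (β γ : R) : R[X] :=
  (X * (X - 1)) ^ 2 + C β * (X * (X - 1)) + C γ

/-- The numerator of `-H⁽⁰⁾` as a polynomial in the distance to its centre of symmetry. -/
noncomputable def numHF (β γ : R) : R[X] :=
  (4 * X ^ 2 - 1) * (quartic β γ * (quartic β γ).comp (X + 1))

/-- The denominator of `-H⁽⁰⁾` as a polynomial in the distance to its centre `c`. -/
noncomputable def denHF (c : R) (S : Multiset R) : R[X] := prodXSqSubC (1 ::ₘ c ^ 2 ::ₘ S)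

/-- The numerator of `-H₀` as a polynomial in the distance to its centre of symmetry. -/
noncomputable def numH0 (K : R) : R[X] := (4 * X ^ 2 - 1) * ((X ^ 2 + C K) ^ 2 - X ^ 2)

/-- The denominator of `-H₀` as a polynomial in the distance to its centre `c`. -/
noncomputable def denH0 (c : R) (T : Multiset R) : R[X] := prodXSqSubC (c ^ 2 ::ₘ T)

theorem numHF_comp_neg_X (β γ : R) : (numHF β γ).comp (-X) = numHF β γ := by
  simp only [numHF, quartic, mul_comp, add_comp, sub_comp, pow_comp, X_comp, C_comp, one_comp,
    ofNat_comp]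
  ring

theorem numH0_comp_neg_X (K : R) : (numH0 K).comp (-X) = numH0 K := by
  simp [numH0]

theorem numHF_zero (β : R) : numHF β 0 = numH0 β * ((X ^ 2 - 1) * X ^ 2) := by
  simp only [numHF, numH0, quartic, mul_comp, add_comp, sub_comp, pow_comp, X_comp, C_comp,
    one_comp, C_0, zero_comp]
  ring

theorem denHF_zero_cons (c : R) (T : Multiset R) :
    denHF c (0 ::ₘ T) = (X ^ 2 - 1) * X ^ 2 * denH0 c T := by
  simp only [denHF, denH0, prodXSqSubC_cons, C_0, C_1]
  ring

theorem exists_eq_cons_of_isCoprime [IsDomain R] {c K β γ : R} {S T : Multiset R}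
    (hcard : S.card = T.card + 1) (hT : 1 ∉ T) (hcop : IsCoprime (numH0 K) (denH0 c T))
    (h : numHF β γ * denH0 c T = numH0 K * denHF c S) : ∃ u, S = u ::ₘ T := by
  have hdvd : denH0 c T ∣ denHF c S := hcop.symm.dvd_of_dvd_mul_left (Dvd.intro_left _ h)
  have hle : c ^ 2 ::ₘ T ≤ c ^ 2 ::ₘ 1 ::ₘ S := by
    rw [Multiset.cons_swap]
    exact le_of_prodXSqSubC_dvd hdvd
  have hTS : T ≤ S :=
    (Multiset.le_cons_of_notMem hT).1 ((Multiset.cons_le_cons_iff _).1 hle)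
  obtain ⟨U, rfl⟩ := Multiset.le_iff_exists_add.1 hTS
  obtain ⟨u, rfl⟩ := Multiset.card_eq_one.1 (by simpa using hcard)
  exact ⟨u, by rw [add_comm, Multiset.singleton_add]⟩

theorem eq_zero_cons_and_eq_of_isCoprime {F : Type*} [Field F] [CharZero F] {c K β γ : F}
    {S T : Multiset F} (hcard : S.card = T.card + 1) (hT : 1 ∉ T)
    (hγ : γ ^ 2 = c ^ 2 * S.prod) (hK : K ^ 2 ≠ c ^ 2 * T.prod)
    (hcop : IsCoprime (numH0 K) (denH0 c T))
    (h : numHF β γ * denH0 c T = numH0 K * denHF c S) : S = 0 ::ₘ T ∧ β = K := by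
  obtain ⟨u, rfl⟩ := exists_eq_cons_of_isCoprime hcard hT hcop h
  have hcancel : numHF β γ = numH0 K * ((X ^ 2 - 1) * (X ^ 2 - C u)) := by
    refine mul_right_cancel₀ (b := denH0 c T) (prodXSqSubC_ne_zero _) ?_
    rw [h]
    simp only [denHF, denH0, prodXSqSubC_cons, C_1]
    ring
  have heval (r : F) := congrArg (eval r) hcancel
  simp only [numHF, numH0, quartic, eval_mul, eval_sub, eval_add, eval_pow, eval_X, eval_C,
    eval_one, eval_ofNat, eval_comp] at heval
  have hγu : γ ^ 2 = K ^ 2 * u := by linear_combination -heval 0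
  obtain rfl : u = 0 := by
    rw [Multiset.prod_cons] at hγ
    have hmul : (K ^ 2 - c ^ 2 * T.prod) * u = 0 := by linear_combination hγ - hγu
    exact (mul_eq_zero.1 hmul).resolve_left (sub_ne_zero.2 hK)
  obtain rfl : γ = 0 := by simpa using hγu
  have htwo : (β - K) * (β + K + 8) = 0 := by linear_combination heval 2 / 180
  have hthree : (β - K) * (β + K + 18) = 0 := by linear_combination heval 3 / 2520
  exact ⟨rfl, by linear_combination (hthree - htwo) / 10⟩

theorem center_eq_of_eventually_eval_eq {F : Type*} [Field F] [CharZero F] {c c' K β γ : F}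
    {S T : Multiset F} (hcop : IsCoprime (numH0 K) (denH0 c' T))
    (h : ∀ᶠ n : ℕ in atTop, (numHF β γ).eval (n - c) * (denH0 c' T).eval (n - c') =
      (numH0 K).eval (n - c') * (denHF c S).eval (n - c)) : c = c' := by
  have hpoly : numHF β γ * taylor (c - c') (denH0 c' T) =
      taylor (c - c') (numH0 K) * denHF c S := by
    refine eq_of_eventually_eval_natCast_sub_eq c (h.mono fun n hn => ?_)
    rwa [eval_mul, eval_mul, taylor_eval, taylor_eval, sub_add_sub_cancel]
  have hdeg : (denH0 c' T).natDegree ≠ 0 := by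
    rw [denH0, natDegree_prodXSqSubC, Multiset.card_cons]
    exact mul_ne_zero two_ne_zero (Nat.succ_ne_zero _)
  exact sub_eq_zero.1 <| eq_zero_of_even_of_mul_taylor_eq (numHF_comp_neg_X β γ)
    (prodXSqSubC_comp_neg_X _) (numH0_comp_neg_X K) (prodXSqSubC_comp_neg_X _)
    (prodXSqSubC_ne_zero _) hcop hdeg hpoly

end Invariants

/-- The coefficient `(1 + k² - c² - ∑ S) / 2` shared by the numerators of `H₀` and `H⁽⁰⁾`, where
`c²` and `S` are the squares of the parameters in the denominator. -/
noncomputable def linCoeff (c k : ℂ) (S : Multiset ℂ) : ℂ := (1 + k ^ 2 - c ^ 2 - S.sum) / 2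

section CentredH0

theorem H0Def_denominator_eq (A₀ A₂ A₃ : ℂ) (n : ℕ) :
    4 * (n : ℂ) * (n - 2 * A₀) * (n - A₀ - A₂) * (n - A₀ + A₂) * (n - A₀ - A₃) * (n - A₀ + A₃) =
      4 * (denH0 A₀ {A₂ ^ 2, A₃ ^ 2}).eval (n - A₀) := by
  simp only [denH0, eval_prodXSqSubC, Multiset.insert_eq_cons, Multiset.map_cons,
    Multiset.map_singleton, Multiset.prod_cons, Multiset.prod_singleton]
  ring

theorem H0Def_iff {A₀ A₁ A₂ A₃ : ℂ} {n : ℕ} :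
    H0Def A₀ A₁ A₂ A₃ n ↔ (denH0 A₀ {A₂ ^ 2, A₃ ^ 2}).eval (n - A₀) ≠ 0 := by
  rw [H0Def, H0Def_denominator_eq, mul_ne_zero_iff_left (by norm_num)]

theorem H0_eq (A₀ A₁ A₂ A₃ : ℂ) (n : ℕ) :
    H0 A₀ A₁ A₂ A₃ n = -((numH0 (linCoeff A₀ A₁ {A₂ ^ 2, A₃ ^ 2})).eval (n - A₀) /
      (denH0 A₀ {A₂ ^ 2, A₃ ^ 2}).eval (n - A₀)) := by
  rw [H0, H0Def_denominator_eq, ← neg_div,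
    ← mul_div_mul_left (-eval _ (numH0 _)) _ (by norm_num : (4 : ℂ) ≠ 0)]
  congr 1
  simp only [numH0, linCoeff, Multiset.insert_eq_cons, Multiset.sum_cons, Multiset.sum_singleton,
    eval_mul, eval_sub, eval_add, eval_pow, eval_X, eval_C, eval_one, eval_ofNat]
  ring

end CentredH0

/-- Coordinates on the balanced tuples: `c` and `x`, `y`, `z` are the centre and the roots of the
denominator of `H⁽⁰⁾`, and `m` is the distance to the centre, which `e₁₂` lowers by one. -/
noncomputable def ofCoords (c x y z k m : ℂ) : HGParam :=
  ⟨-(c + m), -(x + m), (1 + k - c - x - y + z) / 2, (1 + k - c - x + y - z) / 2,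
    (1 + k - c - x - y - z) / 2 - m, (1 + k - c - x + y + z) / 2 - m, 1 - c - x⟩

theorem exists_eq_ofCoords {p : HGParam} (hp0 : p.a0 = 0)
    (hbal : p.b1 + p.b2 + p.b3 - p.a1 - p.a2 - p.a3 = 1) :
    ∃ c x y z k, p = ofCoords c x y z k (-c) := by
  obtain ⟨a0, a1, a2, a3, b1, b2, b3⟩ := p
  obtain rfl : a0 = 0 := hp0
  refine ⟨(1 + a1 - b3) / 2, (1 - a1 - b3) / 2, (b2 - b1 + a3 - a2) / 2, (b2 - b1 + a2 - a3) / 2,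
    a2 + a3 - b3, ?_⟩
  simp only at hbal
  rw [ofCoords, HGParam.mk.injEq]
  refine ⟨by ring, by ring, by ring, by ring, ?_, ?_, by ring⟩ <;> linear_combination hbal / 2

section CentredHF

variable {c x y z k m : ℂ}

theorem shiftn_ofCoords (n : ℕ) :
    shiftn (ofCoords c x y z k m) n = ofCoords c x y z k (m + n) := by
  simp only [shiftn, ofCoords]
  congr 1 <;> ring

theorem e12_ofCoords : e12 (ofCoords c x y z k m) = ofCoords c x y z k (m - 1) := by
  simp only [e12, ofCoords]
  congr 1 <;> ring

theorem U1_ofCoords : U1 (ofCoords c x y z k m) =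
    (1 + k - c + x - y - z) * m / ((ofCoords c x y z k m).b1 * (m - x)) := by
  simp only [U1, ofCoords]; ring_nf

theorem V1_ofCoords : V1 (ofCoords c x y z k m) = (m + x) * (m - y) * (m - z) /
    ((ofCoords c x y z k m).b1 * (ofCoords c x y z k m).b2 * (m - x)) := by
  simp only [V1, ofCoords]; ring_nf

theorem U2_e1_ofCoords : U2 (e1 (ofCoords c x y z k m)) =
    (k + c - x + y + z - 1) / 2 * (2 * m - 1) / ((ofCoords c x y z k m).b2 * (m - c)) := by
  simp only [U2, e1, ofCoords]; ring_nf

theorem V2_e1_ofCoords : V2 (e1 (ofCoords c x y z k m)) = (m - 1 + c) * (m - 1 + y) * (m - 1 + z) /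
    (((ofCoords c x y z k m).b1 + 1) * (ofCoords c x y z k m).b2 * (m - c)) := by
  simp only [V2, e1, ofCoords]; ring_nf

theorem ofCoords_sub_one_b1 :
    (ofCoords c x y z k (m - 1)).b1 = (ofCoords c x y z k m).b1 + 1 := by
  simp only [ofCoords]; ring

theorem ofCoords_sub_one_b2 :
    (ofCoords c x y z k (m - 1)).b2 = (ofCoords c x y z k m).b2 + 1 := by
  simp only [ofCoords]; ring

theorem Q2Def.q1Def {p : HGParam} (hdef : Q2Def p) : Q1Def p :=
  ⟨hdef.1, hdef.2.1, hdef.2.2.1, hdef.2.2.2.2⟩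

theorem Q1Def.factors_ne_zero (hdef : Q1Def (ofCoords c x y z k m)) :
    m - c ≠ 0 ∧ m - x ≠ 0 ∧ m - 1 ≠ 0 ∧ m - 1 - x ≠ 0 ∧ 1 + k - c + x - y - z ≠ 0 := by
  obtain ⟨-, -, -, ha0, -, ha1, hU1⟩ := hdef
  rw [e12_ofCoords, U1_ofCoords] at hU1
  simp only [div_ne_zero_iff, mul_ne_zero_iff] at hU1
  obtain ⟨⟨hw, hm⟩, -, hx'⟩ := hU1
  refine ⟨fun h => ha1 ?_, fun h => ha0 ?_, hm, hx', hw⟩ <;>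
  · simp only [ofCoords]
    linear_combination h

theorem q1_ofCoords (hdef : Q1Def (ofCoords c x y z k m)) :
    q1 (ofCoords c x y z k m) =
      (2 * m - 1) * (quartic (linCoeff c k {x ^ 2, y ^ 2, z ^ 2}) (-(c * x * y * z))).eval m /
        ((ofCoords c x y z k m).b1 * (ofCoords c x y z k m).b2 *
          ((m - c) * (m - x) * (m - 1))) := by
  obtain ⟨hc, hx, hm, -, hw⟩ := hdef.factors_ne_zero
  obtain ⟨hb1, hb2, hb1', -⟩ := hdef
  rw [q1, e12_ofCoords, U1_ofCoords, U1_ofCoords, V1_ofCoords, U2_e1_ofCoords, V2_e1_ofCoords,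
    ofCoords_sub_one_b1]
  generalize hb1_def : (ofCoords c x y z k m).b1 = b1 at hb1 hb1' ⊢
  generalize hb2_def : (ofCoords c x y z k m).b2 = b2 at hb2 ⊢
  simp only [quartic, linCoeff, Multiset.insert_eq_cons, Multiset.sum_cons, Multiset.sum_singleton,
    eval_add, eval_mul, eval_sub, eval_pow, eval_X, eval_C, eval_one]
  generalize hw_def : 1 + k - c + x - y - z = w at hw ⊢
  field_simp
  simp only [ofCoords] at hb1_def hb2_def
  subst hw_def hb1_def hb2_def
  ring

theorem q2_ofCoords (hdef : Q2Def (ofCoords c x y z k m)) :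
    q2 (ofCoords c x y z k m) =
      -((m - 1 + x) * (m - 1 + c) * m * ((m - 1) ^ 2 - y ^ 2) * ((m - 1) ^ 2 - z ^ 2)) /
        ((ofCoords c x y z k m).b1 * ((ofCoords c x y z k m).b1 + 1) *
          ((ofCoords c x y z k m).b2 * ((ofCoords c x y z k m).b2 + 1)) *
          ((m - c) * (m - x) * (m - 1))) := by
  obtain ⟨hc, hx, hm, hx', hw⟩ := hdef.q1Def.factors_ne_zero
  obtain ⟨hb1, hb2, hb1', hb2', -⟩ := hdef
  rw [q2, e12_ofCoords, U1_ofCoords, U1_ofCoords, V1_ofCoords, V2_e1_ofCoords,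
    ofCoords_sub_one_b1, ofCoords_sub_one_b2]
  generalize (ofCoords c x y z k m).b1 = b1 at hb1 hb1' ⊢
  generalize (ofCoords c x y z k m).b2 = b2 at hb2 hb2' ⊢
  generalize 1 + k - c + x - y - z = w at hw ⊢
  field_simp
  ring

theorem eval_denHF_triple : (denHF c {x ^ 2, y ^ 2, z ^ 2}).eval m =
    (m - c) * (m - x) * (m - 1) *
      ((m + x) * (m + c) * (m + 1) * (m ^ 2 - y ^ 2) * (m ^ 2 - z ^ 2)) := by
  simp only [denHF, eval_prodXSqSubC, Multiset.insert_eq_cons, Multiset.map_cons,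
    Multiset.map_singleton, Multiset.prod_cons, Multiset.prod_singleton]
  ring

theorem q1_mul_q1_div_q2_ofCoords (hq1 : Q1Def (ofCoords c x y z k m))
    (hq1' : Q1Def (ofCoords c x y z k (m + 1))) (hq2 : Q2Def (ofCoords c x y z k (m + 1)))
    (hne : q2 (ofCoords c x y z k (m + 1)) ≠ 0) :
    (denHF c {x ^ 2, y ^ 2, z ^ 2}).eval m ≠ 0 ∧
      q1 (ofCoords c x y z k m) * q1 (ofCoords c x y z k (m + 1)) /
          q2 (ofCoords c x y z k (m + 1)) =
        -((numHF (linCoeff c k {x ^ 2, y ^ 2, z ^ 2}) (-(c * x * y * z))).eval m /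
          (denHF c {x ^ 2, y ^ 2, z ^ 2}).eval m) := by
  have hb1 := ofCoords_sub_one_b1 (c := c) (x := x) (y := y) (z := z) (k := k) (m := m + 1)
  have hb2 := ofCoords_sub_one_b2 (c := c) (x := x) (y := y) (z := z) (k := k) (m := m + 1)
  obtain ⟨hc, hx, hm, -⟩ := hq1.factors_ne_zero
  rw [q2_ofCoords hq2] at hne ⊢
  rw [q1_ofCoords hq1, q1_ofCoords hq1', eval_denHF_triple, numHF]
  simp only [add_sub_cancel_right, eval_mul, eval_comp, eval_sub, eval_add, eval_pow, eval_X,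
    eval_one, eval_ofNat] at hb1 hb2 hne ⊢
  rw [hb1, hb2]
  generalize eval m (quartic _ _) = s
  generalize eval (m + 1) (quartic _ _) = t
  obtain ⟨hnum, hden⟩ := div_ne_zero_iff.1 hne
  rw [neg_ne_zero] at hnum
  refine ⟨mul_ne_zero (mul_ne_zero (mul_ne_zero hc hx) hm) hnum, ?_⟩
  simp only [mul_ne_zero_iff] at hnum hden
  obtain ⟨⟨⟨⟨hx', hc'⟩, hm'⟩, hy⟩, hz⟩ := hnum
  obtain ⟨⟨⟨hb1, hb1'⟩, hb2, hb2'⟩, ⟨hc'', hx''⟩, hm''⟩ := hden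
  field_simp
  ring

theorem HFDef.denHF_ne_zero_and_HF_eq {n : ℕ} (hdef : HFDef (ofCoords c x y z k (-c)) n) :
    (denHF c {x ^ 2, y ^ 2, z ^ 2}).eval (n - c) ≠ 0 ∧
      HF (ofCoords c x y z k (-c)) n =
        -((numHF (linCoeff c k {x ^ 2, y ^ 2, z ^ 2}) (-(c * x * y * z))).eval (n - c) /
          (denHF c {x ^ 2, y ^ 2, z ^ 2}).eval (n - c)) := by
  have hn : -c + (n : ℂ) = n - c := by ring
  have hn' : -c + ((n + 1 : ℕ) : ℂ) = n - c + 1 := by push_cast; ring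
  rw [HFDef, shiftn_ofCoords, shiftn_ofCoords, hn, hn'] at hdef
  rw [HF, shiftn_ofCoords, shiftn_ofCoords, hn, hn']
  exact q1_mul_q1_div_q2_ofCoords hdef.1 hdef.2.1 hdef.2.2.1 hdef.2.2.2

theorem H0_eq_HF_iff {A₀ A₁ A₂ A₃ : ℂ} {n : ℕ} (hH0 : H0Def A₀ A₁ A₂ A₃ n)
    (hHF : HFDef (ofCoords c x y z k (-c)) n) :
    H0 A₀ A₁ A₂ A₃ n = HF (ofCoords c x y z k (-c)) n ↔
      (numHF (linCoeff c k {x ^ 2, y ^ 2, z ^ 2}) (-(c * x * y * z))).eval (n - c) *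
          (denH0 A₀ {A₂ ^ 2, A₃ ^ 2}).eval (n - A₀) =
        (numH0 (linCoeff A₀ A₁ {A₂ ^ 2, A₃ ^ 2})).eval (n - A₀) *
          (denHF c {x ^ 2, y ^ 2, z ^ 2}).eval (n - c) := by
  obtain ⟨hden, heq⟩ := hHF.denHF_ne_zero_and_HF_eq
  rw [H0_eq, heq, neg_inj, eq_comm, div_eq_div_iff hden (H0Def_iff.1 hH0)]

end CentredHF

section Definedness

-- Division by zero yields `0`, so a nonzero `q2 p` forces every denominator to be nonzero.
theorem Q2Def_of_q2_ne_zero {p : HGParam} (h : q2 p ≠ 0) : Q2Def p := by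
  obtain ⟨hnum, hU1'⟩ := div_ne_zero_iff.1 h
  rw [neg_ne_zero, mul_ne_zero_iff, mul_ne_zero_iff] at hnum
  obtain ⟨⟨hU1, hV1⟩, hV2⟩ := hnum
  have hb3 : p.b3 - p.a0 - 2 ≠ 0 := by
    convert (mul_ne_zero_iff.1 (div_ne_zero_iff.1 hU1').2).2 using 1
    simp only [e12]
    ring
  simp only [U1, V1, V2, e1, e12, div_ne_zero_iff, mul_ne_zero_iff] at hU1 hV1 hV2
  exact ⟨hU1.2.1, hV2.2.1.2, hV1.2.1.1, hV1.2.1.2, hU1.2.2, hb3, hV2.2.2, hU1'⟩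

theorem e1_shiftn (p : HGParam) (n : ℕ) : e1 (shiftn p n) = shiftn (e1 p) n := by
  simp only [e1, shiftn]
  congr 1 <;> ring

theorem e12_shiftn (p : HGParam) (n : ℕ) : e12 (shiftn p n) = shiftn (e12 p) n := by
  simp only [e12, shiftn]
  congr 1 <;> ring

theorem eventually_U1_shiftn_ne_zero {p : HGParam} (h : p.b1 ≠ p.a1) :
    ∀ᶠ n : ℕ in atTop, U1 (shiftn p n) ≠ 0 := by
  filter_upwards [eventually_natCast_ne ((p.b1 + p.b2 - p.a2 - p.a3) / 2),
    eventually_natCast_ne p.b1, eventually_natCast_ne (1 + p.a0 - p.b3)] with n hsum hb1 hb3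
  simp only [U1, shiftn, div_ne_zero_iff, neg_ne_zero, mul_ne_zero_iff]
  refine ⟨⟨fun h0 => h ?_, fun h0 => hsum ?_⟩, fun h0 => hb1 ?_, fun h0 => hb3 ?_⟩
  · linear_combination h0
  · linear_combination -h0 / 2
  · linear_combination -h0
  · linear_combination h0

theorem eventually_V1_shiftn_ne_zero (p : HGParam) :
    ∀ᶠ n : ℕ in atTop, V1 (shiftn p n) ≠ 0 := by
  filter_upwards [eventually_natCast_ne p.a1, eventually_natCast_ne (p.b2 - p.a2),
    eventually_natCast_ne (p.b2 - p.a3), eventually_natCast_ne p.b1, eventually_natCast_ne p.b2,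
    eventually_natCast_ne (1 + p.a0 - p.b3)] with n ha1 ha2 ha3 hb1 hb2 hb3
  simp only [V1, shiftn, div_ne_zero_iff, neg_ne_zero, mul_ne_zero_iff]
  refine ⟨⟨⟨fun h0 => ha1 ?_, fun h0 => ha2 ?_⟩, fun h0 => ha3 ?_⟩,
    ⟨fun h0 => hb1 ?_, fun h0 => hb2 ?_⟩, fun h0 => hb3 ?_⟩
  case refine_6 => linear_combination h0
  all_goals linear_combination -h0

theorem eventually_V2_shiftn_ne_zero (p : HGParam) :
    ∀ᶠ n : ℕ in atTop, V2 (shiftn p n) ≠ 0 := by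
  filter_upwards [eventually_natCast_ne p.a0, eventually_natCast_ne (p.b1 - p.a2),
    eventually_natCast_ne (p.b1 - p.a3), eventually_natCast_ne p.b1, eventually_natCast_ne p.b2,
    eventually_natCast_ne (1 + p.a1 - p.b3)] with n ha0 ha2 ha3 hb1 hb2 hb3
  simp only [V2, shiftn, div_ne_zero_iff, neg_ne_zero, mul_ne_zero_iff]
  refine ⟨⟨⟨fun h0 => ha0 ?_, fun h0 => ha2 ?_⟩, fun h0 => ha3 ?_⟩,
    ⟨fun h0 => hb1 ?_, fun h0 => hb2 ?_⟩, fun h0 => hb3 ?_⟩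
  case refine_6 => linear_combination h0
  all_goals linear_combination -h0

theorem eventually_q2_shiftn_ne_zero {p : HGParam} (h : p.b1 ≠ p.a1) :
    ∀ᶠ n : ℕ in atTop, q2 (shiftn p n) ≠ 0 := by
  have h' : (e12 p).b1 ≠ (e12 p).a1 := mt add_right_cancel h
  filter_upwards [eventually_U1_shiftn_ne_zero h, eventually_U1_shiftn_ne_zero h',
    eventually_V1_shiftn_ne_zero (e12 p), eventually_V2_shiftn_ne_zero (e1 p)] with n hU hU' hV1 hV2
  rw [q2, e12_shiftn, e1_shiftn]
  exact div_ne_zero (neg_ne_zero.2 (mul_ne_zero (mul_ne_zero hU hV1) hV2)) hU'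

theorem eventually_HFDef {p : HGParam} (h : p.b1 ≠ p.a1) : ∀ᶠ n : ℕ in atTop, HFDef p n := by
  have hq2 := eventually_q2_shiftn_ne_zero h
  filter_upwards [hq2, (tendsto_add_atTop_nat 1).eventually hq2] with n hn hn'
  exact ⟨(Q2Def_of_q2_ne_zero hn).q1Def, (Q2Def_of_q2_ne_zero hn').q1Def,
    Q2Def_of_q2_ne_zero hn', hn'⟩

theorem eventually_H0Def (A₀ A₁ A₂ A₃ : ℂ) : ∀ᶠ n : ℕ in atTop, H0Def A₀ A₁ A₂ A₃ n := by
  simpa only [H0Def_iff, denH0]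
    using eventually_eval_natCast_sub_ne_zero (prodXSqSubC_ne_zero _) A₀

end Definedness

section Solutions

theorem pair_eq_pair_iff {α : Type*} {a b c d : α} :
    ({a, b} : Multiset α) = {c, d} ↔ a = c ∧ b = d ∨ a = d ∧ b = c := by
  simp only [Multiset.insert_eq_cons, Multiset.cons_eq_cons, Multiset.singleton_inj,
    Multiset.singleton_eq_cons_iff]
  grind

theorem sq_eq_sq_iff_exists_sign {R : Type*} [CommRing R] [NoZeroDivisors R] {a b : R} :
    b ^ 2 = a ^ 2 ↔ ∃ s : R, (s = 1 ∨ s = -1) ∧ b = s * a := by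
  rw [sq_eq_sq_iff_eq_or_eq_neg]
  constructor
  · rintro (rfl | rfl)
    exacts [⟨1, by simp⟩, ⟨-1, by simp⟩]
  · rintro ⟨s, rfl | rfl, rfl⟩ <;> simp

theorem pair_sq_eq_pair_sq_iff_exists_signs {R : Type*} [CommRing R] [NoZeroDivisors R]
    {a b a' b' : R} :
    ({a' ^ 2, b' ^ 2} : Multiset R) = {a ^ 2, b ^ 2} ↔
      ∃ s t : R, (s = 1 ∨ s = -1) ∧ (t = 1 ∨ t = -1) ∧ ∃ σ : Bool,
        a' = s * (if σ then b else a) ∧ b' = t * (if σ then a else b) := by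
  simp only [pair_eq_pair_iff, sq_eq_sq_iff_exists_sign]
  constructor
  · rintro (⟨⟨s, hs, ha⟩, t, ht, hb⟩ | ⟨⟨s, hs, ha⟩, t, ht, hb⟩)
    exacts [⟨s, t, hs, ht, false, ha, hb⟩, ⟨s, t, hs, ht, true, ha, hb⟩]
  · rintro ⟨s, t, hs, ht, _ | _, ha, hb⟩
    exacts [.inl ⟨⟨s, hs, ha⟩, t, ht, hb⟩, .inr ⟨⟨s, hs, ha⟩, t, ht, hb⟩]

/-- The tuples whose coordinates have centre `A₀`, last coordinate `±A₁`, and squared roots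
`0`, `A₂²`, `A₃²` in some order; these turn out to be the solutions of `H⁽⁰⁾ = H₀`. -/
def IsSolution (A₀ A₁ A₂ A₃ : ℂ) (p : HGParam) : Prop :=
  ∃ x y z k, p = ofCoords A₀ x y z k (-A₀) ∧ k ^ 2 = A₁ ^ 2 ∧
    ({x ^ 2, y ^ 2, z ^ 2} : Multiset ℂ) = {0, A₂ ^ 2, A₃ ^ 2}

variable {A₀ A₁ A₂ A₃ B₁ B₂ B₃ : ℂ} {p : HGParam}

theorem T1_eq_ofCoords : T1 A₀ B₁ B₂ B₃ = ofCoords A₀ 0 B₂ B₃ B₁ (-A₀) := by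
  simp only [T1, ofCoords]
  congr 1 <;> ring

theorem T2_eq_ofCoords : T2 A₀ B₁ B₂ B₃ = ofCoords A₀ B₂ 0 B₃ B₁ (-A₀) := by
  simp only [T2, ofCoords]
  congr 1 <;> ring

theorem swapAl_ofCoords (c x y z k m : ℂ) :
    swapAl (ofCoords c x y z k m) = ofCoords c x z y k m := by
  simp only [swapAl, ofCoords]
  congr 1 <;> ring

theorem swapBe_ofCoords (c x y z k m : ℂ) :
    swapBe (ofCoords c x y z k m) = ofCoords c x (-z) (-y) k m := by
  simp only [swapBe, ofCoords]
  congr 1 <;> ring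

theorem IsSolution.swapAl (h : IsSolution A₀ A₁ A₂ A₃ p) :
    IsSolution A₀ A₁ A₂ A₃ (swapAl p) := by
  obtain ⟨x, y, z, k, rfl, hk, hxyz⟩ := h
  refine ⟨x, z, y, k, swapAl_ofCoords .., hk, ?_⟩
  rwa [Multiset.insert_eq_cons, Multiset.pair_comm]

theorem IsSolution.swapBe (h : IsSolution A₀ A₁ A₂ A₃ p) :
    IsSolution A₀ A₁ A₂ A₃ (swapBe p) := by
  obtain ⟨x, y, z, k, rfl, hk, hxyz⟩ := h
  refine ⟨x, -z, -y, k, swapBe_ofCoords .., hk, ?_⟩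
  rwa [neg_sq, neg_sq, Multiset.insert_eq_cons, Multiset.pair_comm]

theorem isSolution_T1 (h₁ : B₁ ^ 2 = A₁ ^ 2)
    (h₂₃ : ({B₂ ^ 2, B₃ ^ 2} : Multiset ℂ) = {A₂ ^ 2, A₃ ^ 2}) :
    IsSolution A₀ A₁ A₂ A₃ (T1 A₀ B₁ B₂ B₃) := by
  refine ⟨0, B₂, B₃, B₁, T1_eq_ofCoords, h₁, ?_⟩
  rw [Multiset.insert_eq_cons, h₂₃, sq, mul_zero, Multiset.insert_eq_cons 0]

theorem isSolution_T2 (h₁ : B₁ ^ 2 = A₁ ^ 2)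
    (h₂₃ : ({B₂ ^ 2, B₃ ^ 2} : Multiset ℂ) = {A₂ ^ 2, A₃ ^ 2}) :
    IsSolution A₀ A₁ A₂ A₃ (T2 A₀ B₁ B₂ B₃) := by
  refine ⟨B₂, 0, B₃, B₁, T2_eq_ofCoords, h₁, ?_⟩
  rw [Multiset.insert_eq_cons, Multiset.insert_eq_cons, Multiset.cons_swap,
    ← Multiset.insert_eq_cons (B₂ ^ 2), h₂₃, sq, mul_zero, Multiset.insert_eq_cons 0]

theorem IsSolution.exists_eq_T1_or_T2 (h : IsSolution A₀ A₁ A₂ A₃ p) :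
    ∃ B₁ B₂ B₃, B₁ ^ 2 = A₁ ^ 2 ∧ ({B₂ ^ 2, B₃ ^ 2} : Multiset ℂ) = {A₂ ^ 2, A₃ ^ 2} ∧
      (p = T1 A₀ B₁ B₂ B₃ ∨ p = T2 A₀ B₁ B₂ B₃ ∨ p = Stmt14.swapAl (T2 A₀ B₁ B₂ B₃)) := by
  obtain ⟨x, y, z, k, rfl, hk, hxyz⟩ := h
  have hzero : (0 : ℂ) ∈ ({x ^ 2, y ^ 2, z ^ 2} : Multiset ℂ) := by
    rw [hxyz]
    exact Multiset.mem_cons_self _ _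
  simp only [Multiset.insert_eq_cons, Multiset.mem_cons, Multiset.mem_singleton,
    eq_comm (a := (0 : ℂ)), pow_eq_zero_iff two_ne_zero] at hzero
  simp only [Multiset.insert_eq_cons] at hxyz ⊢
  obtain rfl | rfl | rfl := hzero
  · refine ⟨k, y, z, hk, ?_, .inl T1_eq_ofCoords.symm⟩
    simpa using hxyz
  · refine ⟨k, x, z, hk, ?_, .inr (.inl T2_eq_ofCoords.symm)⟩
    rw [Multiset.cons_swap] at hxyz
    simpa using hxyz
  · refine ⟨k, x, y, hk, ?_, .inr (.inr ?_)⟩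
    · rw [← Multiset.cons_zero (0 ^ 2), Multiset.cons_swap (y ^ 2), Multiset.cons_swap] at hxyz
      simpa using hxyz
    · rw [T2_eq_ofCoords, swapAl_ofCoords]

theorem isSolution_iff : IsSolution A₀ A₁ A₂ A₃ p ↔
    ∃ s₁ s₂ s₃ : ℂ, (s₁ = 1 ∨ s₁ = -1) ∧ (s₂ = 1 ∨ s₂ = -1) ∧ (s₃ = 1 ∨ s₃ = -1) ∧
      ∃ σ τα τβ : Bool, ∃ q₀ : HGParam,
        (q₀ = T1 A₀ (s₁ * A₁) (s₂ * (if σ then A₃ else A₂)) (s₃ * (if σ then A₂ else A₃)) ∨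
          q₀ = T2 A₀ (s₁ * A₁) (s₂ * (if σ then A₃ else A₂)) (s₃ * (if σ then A₂ else A₃))) ∧
        p = (if τα then swapAl else id) ((if τβ then swapBe else id) q₀) := by
  constructor
  · intro h
    obtain ⟨B₁, B₂, B₃, h₁, h₂₃, hp⟩ := h.exists_eq_T1_or_T2
    obtain ⟨s₁, hs₁, rfl⟩ := sq_eq_sq_iff_exists_sign.1 h₁
    obtain ⟨s₂, s₃, hs₂, hs₃, σ, rfl, rfl⟩ := pair_sq_eq_pair_sq_iff_exists_signs.1 h₂₃
    refine ⟨s₁, s₂, s₃, hs₁, hs₂, hs₃, σ, ?_⟩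
    obtain hp | hp | hp := hp
    exacts [⟨false, false, _, .inl rfl, hp⟩, ⟨false, false, _, .inr rfl, hp⟩,
      ⟨true, false, _, .inr rfl, hp⟩]
  · rintro ⟨s₁, s₂, s₃, hs₁, hs₂, hs₃, σ, τα, τβ, q₀, hq₀, rfl⟩
    have h₁ : (s₁ * A₁) ^ 2 = A₁ ^ 2 := sq_eq_sq_iff_exists_sign.2 ⟨s₁, hs₁, rfl⟩
    have h₂₃ := (pair_sq_eq_pair_sq_iff_exists_signs (a := A₂) (b := A₃)).2
      ⟨s₂, s₃, hs₂, hs₃, σ, rfl, rfl⟩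
    have hsol : IsSolution A₀ A₁ A₂ A₃ q₀ := by
      obtain rfl | rfl := hq₀
      exacts [isSolution_T1 h₁ h₂₃, isSolution_T2 h₁ h₂₃]
    cases τα <;> cases τβ
    exacts [hsol, hsol.swapBe, hsol.swapAl, hsol.swapBe.swapAl]

theorem IsSolution.eventually_HFDef
    (hne : ∀ B₁ B₂ B₃, B₁ ^ 2 = A₁ ^ 2 →
      ({B₂ ^ 2, B₃ ^ 2} : Multiset ℂ) = {A₂ ^ 2, A₃ ^ 2} → 1 - A₀ + B₁ + B₂ + B₃ ≠ 0)
    (h : IsSolution A₀ A₁ A₂ A₃ p) : ∀ᶠ n : ℕ in atTop, HFDef p n := by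
  obtain ⟨B₁, B₂, B₃, h₁, h₂₃, hp⟩ := h.exists_eq_T1_or_T2
  have hT1 : (T1 A₀ B₁ B₂ B₃).b1 ≠ (T1 A₀ B₁ B₂ B₃).a1 := fun h0 =>
    hne B₁ (-B₂) (-B₃) h₁ (by simpa only [neg_sq] using h₂₃) <| by
      simp only [T1] at h0
      linear_combination 2 * h0
  have hT2 : (T2 A₀ B₁ B₂ B₃).b1 ≠ (T2 A₀ B₁ B₂ B₃).a1 := fun h0 =>
    hne B₁ B₂ (-B₃) h₁ (by simpa only [neg_sq] using h₂₃) <| by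
      simp only [T2] at h0
      linear_combination 2 * h0
  obtain rfl | rfl | rfl := hp
  exacts [Stmt14.eventually_HFDef hT1, Stmt14.eventually_HFDef hT2, Stmt14.eventually_HFDef hT2]

end Solutions

/-- The conditions on `A` under which the solutions of `H⁽⁰⁾ = H₀` are classified: `H₀` is in
lowest terms, its poles other than `0` and `2A₀` are not at distance `1` from its centre `A₀`,
where it does not take the value `-1`, and none of the numbers `A_{-±±±}` vanishes. -/
structure IsGeneric (A₀ A₁ A₂ A₃ : ℂ) : Prop where
  isCoprime : IsCoprime (numH0 (linCoeff A₀ A₁ {A₂ ^ 2, A₃ ^ 2})) (denH0 A₀ {A₂ ^ 2, A₃ ^ 2})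
  one_notMem : (1 : ℂ) ∉ ({A₂ ^ 2, A₃ ^ 2} : Multiset ℂ)
  linCoeff_sq_ne : linCoeff A₀ A₁ {A₂ ^ 2, A₃ ^ 2} ^ 2 ≠
    A₀ ^ 2 * ({A₂ ^ 2, A₃ ^ 2} : Multiset ℂ).prod
  add_ne_zero (B₁ B₂ B₃ : ℂ) (h₁ : B₁ ^ 2 = A₁ ^ 2)
    (h₂₃ : ({B₂ ^ 2, B₃ ^ 2} : Multiset ℂ) = {A₂ ^ 2, A₃ ^ 2}) : 1 - A₀ + B₁ + B₂ + B₃ ≠ 0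

theorem IsGeneric.isSolution_of_eventually_eq {A₀ A₁ A₂ A₃ : ℂ} {p : HGParam}
    (hA : IsGeneric A₀ A₁ A₂ A₃) (hp0 : p.a0 = 0)
    (hbal : p.b1 + p.b2 + p.b3 - p.a1 - p.a2 - p.a3 = 1)
    (h : ∀ᶠ n : ℕ in atTop, H0Def A₀ A₁ A₂ A₃ n ∧ HFDef p n ∧ H0 A₀ A₁ A₂ A₃ n = HF p n) :
    IsSolution A₀ A₁ A₂ A₃ p := by
  obtain ⟨c, x, y, z, k, rfl⟩ := exists_eq_ofCoords hp0 hbal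
  have hcross := h.mono fun n hn => (H0_eq_HF_iff hn.1 hn.2.1).1 hn.2.2
  obtain rfl : c = A₀ := center_eq_of_eventually_eval_eq hA.isCoprime hcross
  simp only [← eval_mul] at hcross
  have hpoly := eq_of_eventually_eval_natCast_sub_eq c hcross
  have hγ : (-(c * x * y * z)) ^ 2 = c ^ 2 * ({x ^ 2, y ^ 2, z ^ 2} : Multiset ℂ).prod := by
    simp only [Multiset.insert_eq_cons, Multiset.prod_cons, Multiset.prod_singleton]
    ring
  obtain ⟨hS, hβ⟩ := eq_zero_cons_and_eq_of_isCoprime (by simp) hA.one_notMem hγ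
    hA.linCoeff_sq_ne hA.isCoprime hpoly
  refine ⟨x, y, z, k, rfl, ?_, hS⟩
  rw [hS, linCoeff, linCoeff, Multiset.sum_cons, zero_add] at hβ
  linear_combination 2 * hβ

theorem IsSolution.H0_eq_HF {A₀ A₁ A₂ A₃ : ℂ} {p : HGParam} {n : ℕ}
    (h : IsSolution A₀ A₁ A₂ A₃ p) (hH0 : H0Def A₀ A₁ A₂ A₃ n) (hHF : HFDef p n) :
    H0 A₀ A₁ A₂ A₃ n = HF p n := by
  obtain ⟨x, y, z, k, rfl, hk, hS⟩ := h
  have hprod : -(A₀ * x * y * z) = 0 := by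
    have hxyz := congrArg Multiset.prod hS
    simp only [Multiset.insert_eq_cons, Multiset.prod_cons, Multiset.prod_singleton, zero_mul]
      at hxyz
    have hxyz_zero : x * y * z = 0 := by simpa [mul_assoc] using hxyz
    linear_combination -A₀ * hxyz_zero
  have hlin : linCoeff A₀ k (0 ::ₘ {A₂ ^ 2, A₃ ^ 2}) = linCoeff A₀ A₁ {A₂ ^ 2, A₃ ^ 2} := by
    rw [linCoeff, linCoeff, Multiset.sum_cons, zero_add, hk]
  rw [H0_eq_HF_iff hH0 hHF, hprod, hS, Multiset.insert_eq_cons, hlin, denHF_zero_cons, numHF_zero,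
    ← eval_mul, ← eval_mul, mul_assoc]

section Genericity

open MvPolynomial (aeval constantCoeff)

theorem aeval_ne_zero_of_constantCoeff_ne_zero {ι R S : Type*} [CommRing R] [CommRing S]
    [Algebra R S] {v : ι → S} (hv : AlgebraicIndependent R v) {P : MvPolynomial ι R}
    (hP : constantCoeff P ≠ 0) : aeval v P ≠ 0 := fun h => by
  rw [hv.eq_zero_of_aeval_eq_zero P h, map_zero] at hP
  exact hP rfl

/-- `linCoeff A₀ A₁ {A₂², A₃²}` as a polynomial in `A`. -/
noncomputable def linCoeffPoly : MvPolynomial (Fin 4) ℚ :=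
  .C (1 / 2) * (1 + .X 1 ^ 2 - .X 0 ^ 2 - (.X 2 ^ 2 + .X 3 ^ 2))

theorem constantCoeff_linCoeffPoly : constantCoeff linCoeffPoly = 1 / 2 := by
  simp [linCoeffPoly]

theorem aeval_linCoeffPoly (A₀ A₁ A₂ A₃ : ℂ) :
    aeval ![A₀, A₁, A₂, A₃] linCoeffPoly = linCoeff A₀ A₁ {A₂ ^ 2, A₃ ^ 2} := by
  simp only [linCoeffPoly, linCoeff, map_mul, map_sub, map_add, map_one, map_pow,
    MvPolynomial.aeval_C, MvPolynomial.aeval_X, Multiset.insert_eq_cons, Multiset.sum_cons,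
    Multiset.sum_singleton, Matrix.cons_val, eq_ratCast, Rat.cast_div, Rat.cast_one,
    Rat.cast_ofNat]
  ring

variable {A₀ A₁ A₂ A₃ : ℂ}

theorem isCoprime_numH0_denH0 (hind : AlgebraicIndependent ℚ ![A₀, A₁, A₂, A₃]) :
    IsCoprime (numH0 (linCoeff A₀ A₁ {A₂ ^ 2, A₃ ^ 2})) (denH0 A₀ {A₂ ^ 2, A₃ ^ 2}) := by
  have hnum (i : Fin 4) (m : ℂ) (hm : m ^ 2 = ![A₀, A₁, A₂, A₃] i ^ 2) :
      (numH0 (linCoeff A₀ A₁ {A₂ ^ 2, A₃ ^ 2})).eval m ≠ 0 := by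
    have hP := aeval_ne_zero_of_constantCoeff_ne_zero hind
      (P := (4 * .X i ^ 2 - 1) * ((.X i ^ 2 + linCoeffPoly) ^ 2 - .X i ^ 2))
      (by simp [constantCoeff_linCoeffPoly])
    simpa [numH0, hm, aeval_linCoeffPoly] using hP
  refine (isCoprime_iff_aeval_ne_zero_of_isAlgClosed ℂ ℂ _ _).2 fun m => ?_
  rw [coe_aeval_eq_eval, or_iff_not_imp_right, not_not, denH0, eval_prodXSqSubC]
  intro hden
  simp only [Multiset.insert_eq_cons, Multiset.map_cons, Multiset.map_singleton,
    Multiset.prod_cons, Multiset.prod_singleton, mul_eq_zero, sub_eq_zero] at hden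
  obtain hm | hm | hm := hden
  exacts [hnum 0 m hm, hnum 2 m hm, hnum 3 m hm]

theorem one_sub_add_ne_zero (hind : AlgebraicIndependent ℚ ![A₀, A₁, A₂, A₃]) {B₁ B₂ B₃ : ℂ}
    (h₁ : B₁ ^ 2 = A₁ ^ 2) (h₂ : B₂ ^ 2 = A₂ ^ 2) (h₃ : B₃ ^ 2 = A₃ ^ 2) :
    1 - A₀ + B₁ + B₂ + B₃ ≠ 0 := by
  have lift (i : Fin 4) {B : ℂ} (h : B ^ 2 = ![A₀, A₁, A₂, A₃] i ^ 2) :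
      ∃ P : MvPolynomial (Fin 4) ℚ, constantCoeff P = 0 ∧ aeval ![A₀, A₁, A₂, A₃] P = B := by
    obtain rfl | rfl := sq_eq_sq_iff_eq_or_eq_neg.1 h
    exacts [⟨.X i, by simp⟩, ⟨-.X i, by simp⟩]
  obtain ⟨P₁, hP₁, rfl⟩ := lift 1 h₁
  obtain ⟨P₂, hP₂, rfl⟩ := lift 2 h₂
  obtain ⟨P₃, hP₃, rfl⟩ := lift 3 h₃
  have hP := aeval_ne_zero_of_constantCoeff_ne_zero hind (P := 1 - .X 0 + P₁ + P₂ + P₃)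
    (by simp [hP₁, hP₂, hP₃])
  simpa using hP

theorem isGeneric_of_algebraicIndependent (hind : AlgebraicIndependent ℚ ![A₀, A₁, A₂, A₃]) :
    IsGeneric A₀ A₁ A₂ A₃ where
  isCoprime := isCoprime_numH0_denH0 hind
  one_notMem := by
    have hsq (i : Fin 4) : 1 ≠ ![A₀, A₁, A₂, A₃] i ^ 2 := by
      have hP := aeval_ne_zero_of_constantCoeff_ne_zero hind (P := 1 - .X i ^ 2) (by simp)
      simpa only [map_sub, map_one, map_pow, MvPolynomial.aeval_X, sub_ne_zero] using hP
    simpa using And.intro (hsq 2) (hsq 3)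
  linCoeff_sq_ne := by
    have hP := aeval_ne_zero_of_constantCoeff_ne_zero hind
      (P := linCoeffPoly ^ 2 - .X 0 ^ 2 * (.X 2 ^ 2 * .X 3 ^ 2))
      (by simp [constantCoeff_linCoeffPoly])
    simpa [aeval_linCoeffPoly, sub_eq_zero] using hP
  add_ne_zero B₁ B₂ B₃ h₁ h₂₃ := by
    obtain ⟨h₂, h₃⟩ | ⟨h₂, h₃⟩ := pair_eq_pair_iff.1 h₂₃
    · exact one_sub_add_ne_zero hind h₁ h₂ h₃
    · rw [add_right_comm]
      exact one_sub_add_ne_zero hind h₁ h₃ h₂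

end Genericity

end Stmt14

open Filter in
theorem stmt_14_general {A₀ A₁ A₂ A₃ : ℂ} (hA : IsGeneric A₀ A₁ A₂ A₃)
    {p : HGParam} (hp0 : p.a0 = 0)
    (hbal : p.b1 + p.b2 + p.b3 - p.a1 - p.a2 - p.a3 = 1) :
    ((∀ᶠ n : ℕ in atTop, H0Def A₀ A₁ A₂ A₃ n ∧ HFDef p n) ∧
      ∀ n : ℕ, 1 ≤ n → H0Def A₀ A₁ A₂ A₃ n → HFDef p n → H0 A₀ A₁ A₂ A₃ n = HF p n)
      ↔ ∃ s₁ s₂ s₃ : ℂ, (s₁ = 1 ∨ s₁ = -1) ∧ (s₂ = 1 ∨ s₂ = -1) ∧ (s₃ = 1 ∨ s₃ = -1) ∧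
          ∃ σ τα τβ : Bool, ∃ q₀ : HGParam,
            (q₀ = T1 A₀ (s₁ * A₁) (s₂ * (if σ then A₃ else A₂)) (s₃ * (if σ then A₂ else A₃))
              ∨ q₀ = T2 A₀ (s₁ * A₁) (s₂ * (if σ then A₃ else A₂))
                  (s₃ * (if σ then A₂ else A₃)))
            ∧ p = (if τα then swapAl else id) ((if τβ then swapBe else id) q₀) := by
  rw [← isSolution_iff]
  constructor
  · rintro ⟨hdef, heq⟩
    refine hA.isSolution_of_eventually_eq hp0 hbal ?_
    filter_upwards [hdef, eventually_ge_atTop 1] with n hn hn1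
    exact ⟨hn.1, hn.2, heq n hn1 hn.1 hn.2⟩
  · intro h
    exact ⟨(eventually_H0Def A₀ A₁ A₂ A₃).and (h.eventually_HFDef hA.add_ne_zero),
      fun n _ => h.H0_eq_HF⟩

/-- The invariants `H₀(n; A)` and `H⁽⁰⁾(n; α̂)` agree as functions of `n` (both are defined for all
but finitely many `n`, and they are equal at every `n ≥ 1` where both are defined) iff `α̂` arises
from one of the two distinguished tuples by the symmetries `Aⱼ → −Aⱼ (j = 1, 2, 3)`, `A₂ ↔ A₃`,
`α₂ ↔ α₃`, `β₁ ↔ β₂`. -/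
theorem stmt_14 (A₀ A₁ A₂ A₃ : ℂ)
    (hind : AlgebraicIndependent ℚ ![A₀, A₁, A₂, A₃])
    (p : HGParam) (hp0 : p.a0 = 0)
    (hbal : p.b1 + p.b2 + p.b3 - p.a1 - p.a2 - p.a3 = 1) :
    ((∀ᶠ n : ℕ in Filter.atTop, H0Def A₀ A₁ A₂ A₃ n ∧ HFDef p n) ∧
      ∀ n : ℕ, 1 ≤ n → H0Def A₀ A₁ A₂ A₃ n → HFDef p n → H0 A₀ A₁ A₂ A₃ n = HF p n)
      ↔ ∃ s₁ s₂ s₃ : ℂ, (s₁ = 1 ∨ s₁ = -1) ∧ (s₂ = 1 ∨ s₂ = -1) ∧ (s₃ = 1 ∨ s₃ = -1) ∧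
          ∃ σ τα τβ : Bool, ∃ q₀ : HGParam,
            (q₀ = T1 A₀ (s₁ * A₁) (s₂ * (if σ then A₃ else A₂)) (s₃ * (if σ then A₂ else A₃))
              ∨ q₀ = T2 A₀ (s₁ * A₁) (s₂ * (if σ then A₃ else A₂))
                  (s₃ * (if σ then A₂ else A₃)))
            ∧ p = (if τα then swapAl else id) ((if τβ then swapBe else id) q₀) := by
  exact stmt_14_general (isGeneric_of_algebraicIndependent hind) hp0 hbal
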